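/- Let H be a subgroup of a group G with finite index d ≥ 2. Suppose there exist α, β > 0 such that for every finite set W generating H as a group one has |Wⁿ| ≥ (α|W|)^{βn} for all n ∈ ℕ with n ≥ 1. Then, with r = r(d) = (d!)² − d! + 1, for every finite (possibly non-symmetric) set U generating G as a semigroup one has |Uⁿ| ≥ ((α/(d!·2^{r/β}))·|U|)^{(β/r)·n} for every n ∈ ℕ with n ≥ 1. -/

import Mathlib

open Pointwise

/-- `U` generates the group `G` as a semigroup: every element of `G` is a product of
elements of `U` (no inverses allowed). -/
def SemigroupGenerates {G : Type*} [Group G] (U : Set G) : Prop :=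
  ∀ g : G, ∃ n : ℕ, g ∈ U ^ n

/-- `U^{≤m} = ⋃_{i ≤ m} Uⁱ`: products of at most `m` elements of `U`. -/
def wordBall {G : Type*} [Group G] (U : Set G) (m : ℕ) : Set G :=
  {g : G | ∃ i ≤ m, g ∈ U ^ i}

/-!
If `U` generates `G`, then products of at most `k` letters of `U` move a given point of a finite
transitive `G`-set to at least `k + 1` points, until every point is reached: a stationary step
would be stable under each `u ∈ U`, hence, by finiteness, under `u⁻¹` as well. So any coset of `H`
can be moved to any other by a word of length less than `d = [G : H]`. A Schreier-type argument,
which avoids inverses by comparing two elements `g, g'` of a coset through `s * g, s * g' ∈ H` with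
`s` such a word, shows that the words of length at most `r` lying in `H` generate `H` as soon as
`2 * d - 1 ≤ r`; they also number at least `|U| / d`. The growth hypothesis applied to this set
`W`, whose powers satisfy `|Wⁿ| ≤ (r n + 1) |U ^ (r n)| ≤ 2 ^ (r n) |Uⁿ| ^ r`, yields the bound
for `U`.
-/

section WordBall

variable {G : Type*} [Group G] {U : Set G} {a b : ℕ} {x y : G}

theorem SemigroupGenerates.closure_eq_top (hU : SemigroupGenerates U) :
    Subgroup.closure U = ⊤ := by
  refine (Subgroup.eq_top_iff' _).2 fun g => ?_
  obtain ⟨n, hg⟩ := hU g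
  exact Subgroup.pow_subset Subgroup.subset_closure hg

theorem one_mem_wordBall : (1 : G) ∈ wordBall U a :=
  ⟨0, a.zero_le, by simp⟩

theorem subset_wordBall_one : U ⊆ wordBall U 1 :=
  fun x hx => ⟨1, le_rfl, by simpa using hx⟩

theorem wordBall_mono (h : a ≤ b) : wordBall U a ⊆ wordBall U b :=
  fun _ ⟨i, hi, hx⟩ => ⟨i, hi.trans h, hx⟩

theorem mul_mem_wordBall_add (hx : x ∈ wordBall U a) (hy : y ∈ wordBall U b) :
    x * y ∈ wordBall U (a + b) := by
  obtain ⟨i, hi, hx⟩ := hx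
  obtain ⟨j, hj, hy⟩ := hy
  exact ⟨i + j, add_le_add hi hj, pow_add U i j ▸ Set.mul_mem_mul hx hy⟩

theorem mul_mem_wordBall_succ (hx : x ∈ U) (hy : y ∈ wordBall U a) :
    x * y ∈ wordBall U (a + 1) :=
  add_comm 1 a ▸ mul_mem_wordBall_add (subset_wordBall_one hx) hy

theorem pow_subset_wordBall_mul {W : Set G} {r : ℕ} (h : W ⊆ wordBall U r) (n : ℕ) :
    W ^ n ⊆ wordBall U (r * n) := by
  induction n with
  | zero =>
    rw [pow_zero, Set.one_subset]
    exact one_mem_wordBall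
  | succ n ih =>
    rw [pow_succ, mul_add_one, Set.mul_subset_iff]
    exact fun x hx y hy => mul_mem_wordBall_add (ih hx) (h hy)

theorem coe_biUnion_pow_eq_wordBall [DecidableEq G] (U : Finset G) (m : ℕ) :
    ((Finset.range (m + 1)).biUnion (U ^ ·) : Set G) = wordBall (U : Set G) m := by
  ext x
  simp [wordBall]

theorem finite_wordBall (U : Finset G) (m : ℕ) : (wordBall (U : Set G) m).Finite := by
  classical
  rw [← coe_biUnion_pow_eq_wordBall]
  exact Finset.finite_toSet _

theorem ncard_wordBall_le {U : Finset G} (hU : U.Nonempty) (m : ℕ) :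
    (wordBall (U : Set G) m).ncard ≤ (m + 1) * ((U : Set G) ^ m).ncard := by
  classical
  rw [← coe_biUnion_pow_eq_wordBall, ← Finset.coe_pow, Set.ncard_coe_finset,
    Set.ncard_coe_finset]
  have card_pow_le_top : ∀ i ∈ Finset.range (m + 1), (U ^ i).card ≤ (U ^ m).card :=
    fun i hi => hU.card_pow_mono (Finset.mem_range_succ_iff.1 hi)
  simpa using Finset.card_biUnion_le_card_mul _ _ _ card_pow_le_top

theorem ncard_pow_mul_le (U : Finset G) (n r : ℕ) :
    ((U : Set G) ^ (r * n)).ncard ≤ ((U : Set G) ^ n).ncard ^ r := by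
  classical
  rw [mul_comm, pow_mul, ← Finset.coe_pow, ← Finset.coe_pow, Set.ncard_coe_finset,
    Set.ncard_coe_finset]
  exact Finset.card_pow_le

theorem ncard_pow_le_of_subset_wordBall {U : Finset G} (hU : U.Nonempty) {W : Set G} {r : ℕ}
    (hW : W ⊆ wordBall (U : Set G) r) (n : ℕ) :
    (W ^ n).ncard ≤ 2 ^ (r * n) * ((U : Set G) ^ n).ncard ^ r :=
  calc (W ^ n).ncard
    _ ≤ (wordBall (U : Set G) (r * n)).ncard :=
        Set.ncard_le_ncard (pow_subset_wordBall_mul hW n) (finite_wordBall U _)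
    _ ≤ (r * n + 1) * ((U : Set G) ^ (r * n)).ncard := ncard_wordBall_le hU _
    _ ≤ 2 ^ (r * n) * ((U : Set G) ^ n).ncard ^ r :=
        Nat.mul_le_mul Nat.lt_two_pow_self (ncard_pow_mul_le U n r)

end WordBall

section OrbitBall

variable {G X : Type*} [Group G] [MulAction G X] {U : Set G}

/-- The points of a `G`-set to which products of at most `k` elements of `U` move `x`: the ball of
radius `k` around `x` in the (directed) Schreier graph of the action. -/
def orbitBall (U : Set G) (x : X) (k : ℕ) : Set X :=
  (· • x) '' wordBall U k

theorem orbitBall_mono (x : X) : Monotone (orbitBall U x) :=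
  fun _ _ h => Set.image_mono (wordBall_mono h)

theorem mem_orbitBall_self (x : X) (k : ℕ) : x ∈ orbitBall U x k :=
  ⟨1, one_mem_wordBall, one_smul G x⟩

theorem smul_mem_orbitBall_succ {u : G} {x y : X} {k : ℕ} (hu : u ∈ U)
    (hy : y ∈ orbitBall U x k) : u • y ∈ orbitBall U x (k + 1) := by
  obtain ⟨g, hg, rfl⟩ := hy
  exact ⟨u * g, mul_mem_wordBall_succ hu hg, mul_smul u g x⟩

variable [Finite X] [MulAction.IsPretransitive G X]

theorem orbitBall_eq_univ_of_succ_subset (hU : Subgroup.closure U = ⊤) {x : X} {k : ℕ}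
    (h : orbitBall U x (k + 1) ⊆ orbitBall U x k) : orbitBall U x k = Set.univ := by
  have closure_le_stabilizer :
      Subgroup.closure U ≤ MulAction.stabilizer G (orbitBall U x k) :=
    (Subgroup.closure_le _).2 fun u hu =>
      (MulAction.mem_stabilizer_set' (Set.toFinite _)).2 fun y hy =>
        h (smul_mem_orbitBall_succ hu hy)
  refine Set.eq_univ_of_forall fun y => ?_
  obtain ⟨g, rfl⟩ := MulAction.exists_smul_eq G x y
  have g_mem : g ∈ MulAction.stabilizer G (orbitBall U x k) :=
    closure_le_stabilizer (hU ▸ Subgroup.mem_top g)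
  exact (MulAction.mem_stabilizer_set.1 g_mem x).2 (mem_orbitBall_self x k)

theorem min_succ_card_le_ncard_orbitBall (hU : Subgroup.closure U = ⊤) (x : X) (k : ℕ) :
    min (k + 1) (Nat.card X) ≤ (orbitBall U x k).ncard := by
  induction k with
  | zero =>
    exact (min_le_left _ _).trans
      ((Set.ncard_pos (Set.toFinite _)).2 ⟨x, mem_orbitBall_self x 0⟩)
  | succ k ih =>
    by_cases h : orbitBall U x (k + 1) ⊆ orbitBall U x k
    · have succ_eq_univ : orbitBall U x (k + 1) = Set.univ :=
        Set.eq_univ_of_univ_subset <|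
          orbitBall_eq_univ_of_succ_subset hU h ▸ orbitBall_mono x k.le_succ
      rw [succ_eq_univ, Set.ncard_univ]
      exact min_le_right _ _
    · have ncard_lt : (orbitBall U x k).ncard < (orbitBall U x (k + 1)).ncard :=
        Set.ncard_lt_ncard ⟨orbitBall_mono x k.le_succ, h⟩ (Set.toFinite _)
      omega

theorem exists_mem_wordBall_smul_eq (hU : Subgroup.closure U = ⊤) (x y : X) :
    ∃ s ∈ wordBall U (Nat.card X - 1), s • x = y := by
  suffices orbitBall U x (Nat.card X - 1) = Set.univ from
    this.ge (Set.mem_univ y)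
  have : Nonempty X := ⟨x⟩
  refine Set.eq_of_subset_of_ncard_le (Set.subset_univ _) ?_ (Set.toFinite _)
  rw [Set.ncard_univ]
  have ncard_ge := min_succ_card_le_ncard_orbitBall hU x (Nat.card X - 1)
  rwa [Nat.sub_add_cancel Nat.card_pos, min_self] at ncard_ge

end OrbitBall

section FiniteIndex

variable {G : Type*} [Group G] (H : Subgroup G) [H.FiniteIndex] {r : ℕ}

theorem exists_mem_wordBall_inv_mul_mem {U : Set G} (hU : Subgroup.closure U = ⊤) (g : G) :
    ∃ t ∈ wordBall U (H.index - 1), t⁻¹ * g ∈ H := by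
  obtain ⟨t, ht, smul_eq⟩ := exists_mem_wordBall_smul_eq hU ((1 : G) : G ⧸ H) (g : G ⧸ H)
  rw [MulAction.Quotient.smul_coe, smul_eq_mul, mul_one, QuotientGroup.eq] at smul_eq
  exact ⟨t, ht, smul_eq⟩

theorem exists_mem_wordBall_mul_mem {U : Set G} (hU : Subgroup.closure U = ⊤) (g : G) :
    ∃ s ∈ wordBall U (H.index - 1), s * g ∈ H := by
  obtain ⟨s, hs, smul_eq⟩ := exists_mem_wordBall_smul_eq hU (g : G ⧸ H) ((1 : G) : G ⧸ H)
  rw [MulAction.Quotient.smul_coe, smul_eq_mul, eq_comm, QuotientGroup.eq, inv_one,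
    one_mul] at smul_eq
  exact ⟨s, hs, smul_eq⟩

theorem inv_mul_mem_closure_inter_wordBall {U : Set G} (hU : Subgroup.closure U = ⊤)
    (hr : 2 * H.index ≤ r + 1) {g g' : G} (hg : g ∈ wordBall U H.index)
    (hg' : g' ∈ wordBall U H.index) (h : g⁻¹ * g' ∈ H) :
    g⁻¹ * g' ∈ Subgroup.closure ((H : Set G) ∩ wordBall U r) := by
  obtain ⟨s, hs, hsg⟩ := exists_mem_wordBall_mul_mem H hU g
  have mul_mem_wordBall {x : G} (hx : x ∈ wordBall U H.index) : s * x ∈ wordBall U r :=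
    wordBall_mono (by omega) (mul_mem_wordBall_add hs hx)
  have hsg' : s * g' ∈ H := by simpa [mul_assoc] using mul_mem hsg h
  have key : (s * g)⁻¹ * (s * g') ∈ Subgroup.closure ((H : Set G) ∩ wordBall U r) :=
    mul_mem (inv_mem (Subgroup.subset_closure ⟨hsg, mul_mem_wordBall hg⟩))
      (Subgroup.subset_closure ⟨hsg', mul_mem_wordBall hg'⟩)
  simpa [mul_assoc] using key

theorem exists_mem_wordBall_inv_mul_mem_closure {U : Set G} (hU : Subgroup.closure U = ⊤)
    (hr : 2 * H.index ≤ r + 1) (g : G) :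
    ∃ t ∈ wordBall U (H.index - 1),
      t⁻¹ * g ∈ Subgroup.closure ((H : Set G) ∩ wordBall U r) := by
  have index_pos : 1 ≤ H.index := Nat.one_le_iff_ne_zero.2 Subgroup.FiniteIndex.index_ne_zero
  have mem_ball {t : G} (ht : t ∈ wordBall U (H.index - 1)) : t ∈ wordBall U H.index :=
    wordBall_mono (Nat.sub_le _ _) ht
  have mul_mem_ball {u t : G} (hu : u ∈ U) (ht : t ∈ wordBall U (H.index - 1)) :
      u * t ∈ wordBall U H.index :=
    Nat.sub_add_cancel index_pos ▸ mul_mem_wordBall_succ hu ht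
  have hg : g ∈ Subgroup.closure U := hU ▸ Subgroup.mem_top g
  induction hg using Subgroup.closure_induction_left with
  | one => exact ⟨1, one_mem_wordBall, by simp⟩
  | mul_left u hu g _ ih =>
    obtain ⟨t, ht, htg⟩ := ih
    obtain ⟨t', ht', hH⟩ := exists_mem_wordBall_inv_mul_mem H hU (u * t)
    refine ⟨t', ht', ?_⟩
    simpa [mul_assoc] using mul_mem
      (inv_mul_mem_closure_inter_wordBall H hU hr (mem_ball ht') (mul_mem_ball hu ht) hH) htg
  | inv_mul_cancel u hu g _ ih =>
    obtain ⟨t, ht, htg⟩ := ih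
    obtain ⟨t', ht', hH⟩ := exists_mem_wordBall_inv_mul_mem H hU (u⁻¹ * t)
    have hH' : (u * t')⁻¹ * t ∈ H := by simpa [mul_assoc] using hH
    refine ⟨t', ht', ?_⟩
    simpa [mul_assoc] using mul_mem
      (inv_mul_mem_closure_inter_wordBall H hU hr (mul_mem_ball hu ht') (mem_ball ht) hH') htg

theorem closure_inter_wordBall_eq {U : Set G} (hU : Subgroup.closure U = ⊤)
    (hr : 2 * H.index ≤ r + 1) : Subgroup.closure ((H : Set G) ∩ wordBall U r) = H := by
  have closure_le : Subgroup.closure ((H : Set G) ∩ wordBall U r) ≤ H :=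
    (Subgroup.closure_le H).2 Set.inter_subset_left
  refine le_antisymm closure_le fun g hg => ?_
  obtain ⟨t, ht, htg⟩ := exists_mem_wordBall_inv_mul_mem_closure H hU hr g
  have t_mem : t ∈ H := inv_mem_iff.1 ((H.mul_mem_cancel_right hg).1 (closure_le htg))
  have t_mem_closure : t ∈ Subgroup.closure ((H : Set G) ∩ wordBall U r) :=
    Subgroup.subset_closure ⟨t_mem, wordBall_mono (by omega) ht⟩
  simpa using mul_mem t_mem_closure htg

theorem card_le_index_mul_ncard_inter_wordBall {U : Finset G}
    (hU : Subgroup.closure (U : Set G) = ⊤) (hr : H.index ≤ r) :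
    U.card ≤ H.index * ((H : Set G) ∩ wordBall (U : Set G) r).ncard := by
  classical
  have := Fintype.ofFinite (G ⧸ H)
  have card_fiber_le (q : G ⧸ H) :
      (U.filter fun u : G => (u : G ⧸ H) = q).card
        ≤ ((H : Set G) ∩ wordBall (U : Set G) r).ncard := by
    obtain ⟨g, rfl⟩ := QuotientGroup.mk_surjective q
    obtain ⟨s, hs, hsg⟩ := exists_mem_wordBall_mul_mem H hU g
    rw [← Set.ncard_coe_finset]
    refine Set.ncard_le_ncard_of_injOn (s * ·) (fun u hu => ?_)
      (mul_right_injective s).injOn ((finite_wordBall U r).inter_of_right _)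
    obtain ⟨hu, hug⟩ := Finset.mem_filter.1 hu
    have index_ne_zero : H.index ≠ 0 := Subgroup.FiniteIndex.index_ne_zero
    have hsu : s * u ∈ H := by
      simpa [mul_assoc] using mul_mem hsg (QuotientGroup.eq.1 hug.symm)
    exact ⟨hsu, wordBall_mono (by omega) (mul_mem_wordBall_add hs (subset_wordBall_one hu))⟩
  have card_le := Finset.card_le_mul_card_image_of_maps_to
    (f := ((↑) : G → G ⧸ H)) (fun u _ => Finset.mem_univ _) _ fun q _ => card_fiber_le q
  rwa [Finset.card_univ, ← Nat.card_eq_fintype_card, mul_comm] at card_le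

end FiniteIndex

theorem div_two_rpow_rpow_le {a x β : ℝ} {r n : ℕ} (ha : 0 ≤ a) (hx : 0 ≤ x) (hβ : 0 < β)
    (hr : 0 < r) (h : a ^ (β * n) ≤ 2 ^ (r * n) * x ^ r) :
    (a / 2 ^ (r / β)) ^ (β / r * n) ≤ x := by
  have r_pos : (0 : ℝ) < r := Nat.cast_pos.2 hr
  have two_rpow : ((2 : ℝ) ^ (r / β)) ^ (β * n) = 2 ^ (r * n) := by
    rw [← Real.rpow_mul zero_le_two, ← Real.rpow_natCast]
    congr 1
    push_cast
    field_simp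
  have rpow_le : (a / 2 ^ (r / β)) ^ (β * n) ≤ x ^ (r : ℝ) := by
    rw [Real.div_rpow ha (by positivity), two_rpow, Real.rpow_natCast,
      div_le_iff₀' (by positivity)]
    exact h
  rw [show β / r * n = β * n * (r : ℝ)⁻¹ by ring, Real.rpow_mul (by positivity)]
  exact (Real.rpow_inv_le_iff_of_pos (by positivity) hx r_pos).2 rpow_le

theorem statement14_general {G : Type*} [Group G] (H : Subgroup G) [H.FiniteIndex] {α β : ℝ}
    (hα : 0 < α) (hβ : 0 < β)
    (hH : ∀ W : Finset G, Subgroup.closure (W : Set G) = H →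
      ∀ n : ℕ, 1 ≤ n → (α * W.card) ^ (β * n) ≤ ((W : Set G) ^ n).ncard)
    {r : ℕ} (hr : 2 * H.index ≤ r + 1) {U : Finset G} (hU : Subgroup.closure (U : Set G) = ⊤)
    {n : ℕ} (hn : 1 ≤ n) :
    (α / (H.index * 2 ^ (r / β)) * U.card) ^ (β / r * n) ≤ ((U : Set G) ^ n).ncard := by
  have index_pos : 0 < H.index := Nat.pos_of_ne_zero Subgroup.FiniteIndex.index_ne_zero
  have r_pos : 0 < r := by omega
  rcases U.eq_empty_or_nonempty with rfl | hne
  · have exponent_ne_zero : β / r * n ≠ 0 := by positivity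
    simp [Real.zero_rpow exponent_ne_zero]
  obtain ⟨W, hW⟩ := ((finite_wordBall U r).inter_of_right (H : Set G)).exists_finset_coe
  have card_le : (U.card : ℝ) / H.index ≤ W.card := by
    rw [div_le_iff₀' (by positivity), ← Set.ncard_coe_finset W, hW]
    exact_mod_cast card_le_index_mul_ncard_inter_wordBall H hU (by omega)
  have growth : (α * (U.card / H.index)) ^ (β * n)
      ≤ 2 ^ (r * n) * (((U : Set G) ^ n).ncard : ℝ) ^ r :=
    calc (α * (U.card / H.index)) ^ (β * n)
      _ ≤ (α * W.card) ^ (β * n) := by gcongr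
      _ ≤ ((W : Set G) ^ n).ncard := hH W (hW ▸ closure_inter_wordBall_eq H hU hr) n hn
      _ ≤ 2 ^ (r * n) * (((U : Set G) ^ n).ncard : ℝ) ^ r := by
        exact_mod_cast ncard_pow_le_of_subset_wordBall hne (hW ▸ Set.inter_subset_right) n
  convert div_two_rpow_rpow_le (by positivity) (Nat.cast_nonneg _) hβ r_pos growth using 2
  field_simp

theorem two_mul_le_sq_sub_self_add_two (m : ℕ) : 2 * m ≤ m ^ 2 - m + 2 := by
  rcases m with _ | _ | m
  · simp
  · simp
  · rw [sq, ← Nat.mul_sub_one]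
    simp only [Nat.add_sub_cancel]
    nlinarith

/-- Let `H ≤ G` have finite index `d ≥ 2`, and suppose `α, β > 0` are
such that every finite set `W` generating `H` as a group satisfies
`|Wⁿ| ≥ (α|W|)^{βn}` for all `n ≥ 1`. Then, with `r = (d!)² − d! + 1`, every finite
(possibly non-symmetric) set `U` generating `G` as a semigroup satisfies
`|Uⁿ| ≥ ((α/(d!·2^{r/β}))·|U|)^{(β/r)·n}` for all `n ≥ 1`. -/
theorem statement14 {G : Type*} [Group G] (H : Subgroup G) (d : ℕ) (hd : 2 ≤ d)
    (hidx : H.index = d) (α β : ℝ) (hα : 0 < α) (hβ : 0 < β)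
    (hH : ∀ W : Finset G, Subgroup.closure (W : Set G) = H →
      ∀ n : ℕ, 1 ≤ n →
        (α * (W.card : ℝ)) ^ (β * (n : ℝ)) ≤ (((W : Set G) ^ n).ncard : ℝ)) :
    ∀ r : ℕ, r = d.factorial ^ 2 - d.factorial + 1 →
      ∀ U : Finset G, SemigroupGenerates (U : Set G) →
        ∀ n : ℕ, 1 ≤ n →
          ((α / ((d.factorial : ℝ) * (2 : ℝ) ^ ((r : ℝ) / β))) * (U.card : ℝ))
              ^ ((β / (r : ℝ)) * (n : ℝ))
            ≤ (((U : Set G) ^ n).ncard : ℝ) := by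
  rintro r rfl U hU n hn
  have : H.FiniteIndex := ⟨by omega⟩
  have index_le : H.index ≤ d.factorial := hidx ▸ d.self_le_factorial
  have hr : 2 * H.index ≤ d.factorial ^ 2 - d.factorial + 1 + 1 :=
    (Nat.mul_le_mul_left 2 index_le).trans (two_mul_le_sq_sub_self_add_two _)
  have index_pos : 0 < H.index := by omega
  refine le_trans ?_ (statement14_general H hα hβ hH hr hU.closure_eq_top hn)
  gcongr
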